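/- arXiv:2307.03594 — 2 statements merged into one kernel-verified Lean document; each statement's English description precedes it below -/
import Mathlib

section
/- Let X, Y, Y', Y'' be real random variables on a common probability space such that Y, Y', Y'' are identically distributed, (X,Y') is countermonotonic, and (X,Y'') is comonotonic. Let g₁, g₂ : ℝ → ℝ be nondecreasing functions such that g₁∘X, g₂∘Y, g₂∘Y', g₂∘Y'' are integrable, the products (g₁∘X)·(g₂∘Y), (g₁∘X)·(g₂∘Y'), (g₁∘X)·(g₂∘Y'') are integrable, and neither g₁∘X nor g₂∘Y is almost surely constant. Define C := Cov(g₁∘X, g₂∘Y), C' := Cov(g₁∘X, g₂∘Y'), C'' := Cov(g₁∘X, g₂∘Y''), and the generalised correlation r := C/|C'| if C < 0 and r := C/|C''| if C ≥ 0. Then: (i) −1 ≤ r ≤ 1 (normalisation); and (ii) if (X,Y) is comonotonic then r = 1, and if (X,Y) is countermonotonic then r = −1. -/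
open MeasureTheory

/-- `(X,Y)` is comonotonic: it has the same joint distribution as a pair of
nondecreasing functions of a single random variable. -/
def Comonotonic {Ω : Type*} [MeasurableSpace Ω] (μ : Measure Ω) (X Y : Ω → ℝ) : Prop :=
  ∃ (Z : Ω → ℝ) (ν₁ ν₂ : ℝ → ℝ), Measurable Z ∧ Monotone ν₁ ∧ Monotone ν₂ ∧
    μ.map (fun ω => (X ω, Y ω)) = μ.map (fun ω => (ν₁ (Z ω), ν₂ (Z ω)))

/-- `(X,Y)` is countermonotonic: it has the same joint distribution as a pair of a
nondecreasing and a nonincreasing function of a single random variable. -/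
def Countermonotonic {Ω : Type*} [MeasurableSpace Ω] (μ : Measure Ω) (X Y : Ω → ℝ) : Prop :=
  ∃ (Z : Ω → ℝ) (ν₁ ν₂ : ℝ → ℝ), Measurable Z ∧ Monotone ν₁ ∧ Antitone ν₂ ∧
    μ.map (fun ω => (X ω, Y ω)) = μ.map (fun ω => (ν₁ (Z ω), ν₂ (Z ω)))

/-- Covariance `Cov(U,V) = E[UV] − E[U]E[V]`. -/
noncomputable def covar {Ω : Type*} [MeasurableSpace Ω] (μ : Measure Ω) (U V : Ω → ℝ) : ℝ :=
  ∫ ω, U ω * V ω ∂μ - (∫ ω, U ω ∂μ) * (∫ ω, V ω ∂μ)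

/-- The generalised correlation built from the generalised errors `U = g₁∘X`,
`V = g₂∘Y` and the countermonotonic/comonotonic couplings `V' = g₂∘Y'`,
`V'' = g₂∘Y''`. -/
noncomputable def gCor {Ω : Type*} [MeasurableSpace Ω] (μ : Measure Ω)
    (U V V' V'' : Ω → ℝ) : ℝ :=
  if covar μ U V < 0 then covar μ U V / |covar μ U V'|
  else covar μ U V / |covar μ U V''|

/-- For two upper events the probability of the intersection under a comonotonic pair attains the
Fréchet upper bound. -/
theorem Comonotonic.measureReal_inter_eq_min {Ω : Type*} [MeasurableSpace Ω] {μ : Measure Ω}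
    [IsProbabilityMeasure μ] {X Y : Ω → ℝ} (hX : Measurable X) (hY : Measurable Y)
    (h : Comonotonic μ X Y) {S T : Set ℝ} (hS : IsUpperSet S) (hT : IsUpperSet T)
    (hSm : MeasurableSet S) (hTm : MeasurableSet T) :
    μ.real (X ⁻¹' S ∩ Y ⁻¹' T) = min (μ.real (X ⁻¹' S)) (μ.real (Y ⁻¹' T)) := by
  obtain ⟨Z, ν₁, ν₂, hZ, h₁, h₂, hmap⟩ := h
  have key : ∀ A B : Set ℝ, MeasurableSet A → MeasurableSet B →
      μ.real (X ⁻¹' A ∩ Y ⁻¹' B) = μ.real (Z ⁻¹' (ν₁ ⁻¹' A ∩ ν₂ ⁻¹' B)) := by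
    intro A B hA hB
    have := congrArg (fun m => m.real (A ×ˢ B)) hmap
    rw [map_measureReal_apply (hX.prodMk hY) (hA.prod hB),
      map_measureReal_apply (show Measurable fun ω => (ν₁ (Z ω), ν₂ (Z ω)) from
        (h₁.measurable.comp hZ).prodMk (h₂.measurable.comp hZ)) (hA.prod hB)] at this
    exact this
  have e₁ := key S Set.univ hSm .univ
  have e₂ := key Set.univ T .univ hTm
  simp only [Set.preimage_univ, Set.inter_univ, Set.univ_inter] at e₁ e₂
  rw [key S T hSm hTm, e₁, e₂]
  rcases (hS.preimage h₁).total (hT.preimage h₂) with hsub | hsub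
  · rw [Set.inter_eq_left.2 hsub, min_eq_left (measureReal_mono (Set.preimage_mono hsub))]
  · rw [Set.inter_eq_right.2 hsub, min_eq_right (measureReal_mono (Set.preimage_mono hsub))]

/-- The difference of the indicators of `{t < a}` and `{t < b}` at `t`, whose integral over `t`
is `a - b`. -/
noncomputable def thresholdDiff (a b t : ℝ) : ℝ :=
  (Set.Iio a).indicator 1 t - (Set.Iio b).indicator 1 t

theorem thresholdDiff_eq_indicator (a b : ℝ) :
    thresholdDiff a b =
      fun t => (Set.Ico b a).indicator 1 t - (Set.Ico a b).indicator (1 : ℝ → ℝ) t := by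
  ext t
  simp only [thresholdDiff, Set.indicator_apply, Set.mem_Iio, Set.mem_Ico, Pi.one_apply]
  grind

theorem abs_thresholdDiff (a b : ℝ) :
    (fun t => |thresholdDiff a b t|) =
      fun t => (Set.Ico b a).indicator 1 t + (Set.Ico a b).indicator (1 : ℝ → ℝ) t := by
  ext t
  simp only [thresholdDiff, Set.indicator_apply, Set.mem_Iio, Set.mem_Ico, Pi.one_apply]
  grind

theorem integrable_indicator_Ico_one (a b : ℝ) :
    Integrable ((Set.Ico a b).indicator (1 : ℝ → ℝ)) := by
  rw [integrable_indicator_iff measurableSet_Ico]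
  exact integrableOn_const (by simp)

theorem integrable_thresholdDiff (a b : ℝ) : Integrable (thresholdDiff a b) := by
  rw [thresholdDiff_eq_indicator]
  exact (integrable_indicator_Ico_one b a).sub (integrable_indicator_Ico_one a b)

theorem integral_thresholdDiff (a b : ℝ) : ∫ t, thresholdDiff a b t = a - b := by
  rw [thresholdDiff_eq_indicator,
    integral_sub (integrable_indicator_Ico_one b a) (integrable_indicator_Ico_one a b),
    integral_indicator_one measurableSet_Ico, integral_indicator_one measurableSet_Ico]
  rcases le_total a b with h | h <;> simp [h]

theorem integral_abs_thresholdDiff (a b : ℝ) : ∫ t, |thresholdDiff a b t| = |a - b| := by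
  rw [abs_thresholdDiff,
    integral_add (integrable_indicator_Ico_one b a) (integrable_indicator_Ico_one a b),
    integral_indicator_one measurableSet_Ico, integral_indicator_one measurableSet_Ico]
  rcases le_total a b with h | h <;> simp [h, abs_of_nonneg, abs_of_nonpos]

theorem Measurable.thresholdDiff {α : Type*} [MeasurableSpace α] {f g h : α → ℝ}
    (hf : Measurable f) (hg : Measurable g) (hh : Measurable h) :
    Measurable fun x => thresholdDiff (f x) (g x) (h x) := by
  simp only [_root_.thresholdDiff, Set.indicator_apply, Set.mem_Iio, Pi.one_apply]
  exact (Measurable.ite (measurableSet_lt hh hf) measurable_const measurable_const).sub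
    (Measurable.ite (measurableSet_lt hh hg) measurable_const measurable_const)

/-- The gap between the joint survival function and the product of the marginal ones. -/
noncomputable def survivalGap {Ω : Type*} [MeasurableSpace Ω] (μ : Measure Ω) (U V : Ω → ℝ)
    (p : ℝ × ℝ) : ℝ :=
  μ.real ({ω | p.1 < U ω} ∩ {ω | p.2 < V ω}) - μ.real {ω | p.1 < U ω} * μ.real {ω | p.2 < V ω}

section CovarianceOfCopies

variable {Ω : Type*} [MeasurableSpace Ω] {μ : Measure Ω} [IsProbabilityMeasure μ] {U V : Ω → ℝ}

theorem integrable_sub_mul_sub_prod (hU : Integrable U μ) (hV : Integrable V μ)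
    (hUV : Integrable (fun ω => U ω * V ω) μ) :
    Integrable (fun q : Ω × Ω => (U q.1 - U q.2) * (V q.1 - V q.2)) (μ.prod μ) := by
  have e : (fun q : Ω × Ω => (U q.1 - U q.2) * (V q.1 - V q.2)) = fun q =>
      (U q.1 * V q.1 - U q.1 * V q.2) - (V q.1 * U q.2 - U q.2 * V q.2) := by
    ext q; ring
  rw [e]
  exact ((hUV.comp_fst μ).sub (hU.mul_prod hV)).sub ((hV.mul_prod hU).sub (hUV.comp_snd μ))

theorem integral_sub_mul_sub_prod (hU : Integrable U μ) (hV : Integrable V μ)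
    (hUV : Integrable (fun ω => U ω * V ω) μ) :
    ∫ q : Ω × Ω, (U q.1 - U q.2) * (V q.1 - V q.2) ∂(μ.prod μ) = 2 * covar μ U V := by
  have e : (fun q : Ω × Ω => (U q.1 - U q.2) * (V q.1 - V q.2)) = fun q =>
      (U q.1 * V q.1 - U q.1 * V q.2) - (V q.1 * U q.2 - U q.2 * V q.2) := by
    ext q; ring
  have i₁ := hUV.comp_fst μ
  have i₂ := hU.mul_prod hV
  have i₃ := hV.mul_prod hU
  have i₄ := hUV.comp_snd μ
  rw [e, integral_sub (f := fun q : Ω × Ω => U q.1 * V q.1 - U q.1 * V q.2)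
    (g := fun q : Ω × Ω => V q.1 * U q.2 - U q.2 * V q.2) (i₁.sub i₂) (i₃.sub i₄), integral_sub i₁ i₂, integral_sub i₃ i₄,
    integral_prod_mul, integral_prod_mul, integral_fun_fst (fun ω => U ω * V ω),
    integral_fun_snd (fun ω => U ω * V ω)]
  simp only [probReal_univ, one_smul, covar]
  ring

theorem integral_thresholdDiff_mul_prod (hU : Measurable U) (hV : Measurable V) (p : ℝ × ℝ) :
    ∫ q : Ω × Ω, thresholdDiff (U q.1) (U q.2) p.1 * thresholdDiff (V q.1) (V q.2) p.2
      ∂(μ.prod μ) = 2 * survivalGap μ U V p := by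
  have hA : MeasurableSet {ω | p.1 < U ω} := measurableSet_lt measurable_const hU
  have hB : MeasurableSet {ω | p.2 < V ω} := measurableSet_lt measurable_const hV
  have hmul : (fun ω => {ω | p.1 < U ω}.indicator (1 : Ω → ℝ) ω *
      {ω | p.2 < V ω}.indicator (1 : Ω → ℝ) ω) =
      ({ω | p.1 < U ω} ∩ {ω | p.2 < V ω}).indicator 1 := by
    rw [Set.inter_indicator_one]; rfl
  have ind : ∀ {A : Set Ω}, MeasurableSet A → Integrable (A.indicator (1 : Ω → ℝ)) μ :=
    fun h => (integrable_const (1 : ℝ)).indicator h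
  have key := integral_sub_mul_sub_prod (ind hA) (ind hB) (by rw [hmul]; exact ind (hA.inter hB))
  rw [covar, hmul, integral_indicator_one hA, integral_indicator_one hB,
    integral_indicator_one (hA.inter hB)] at key
  exact key

theorem integrable_thresholdDiff_mul (hUm : Measurable U) (hVm : Measurable V)
    (hU : Integrable U μ) (hV : Integrable V μ) (hUV : Integrable (fun ω => U ω * V ω) μ) :
    Integrable (Function.uncurry fun (q : Ω × Ω) (p : ℝ × ℝ) =>
      thresholdDiff (U q.1) (U q.2) p.1 * thresholdDiff (V q.1) (V q.2) p.2)
      ((μ.prod μ).prod (volume.prod volume)) := by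
  have hm : Measurable (Function.uncurry fun (q : Ω × Ω) (p : ℝ × ℝ) =>
      thresholdDiff (U q.1) (U q.2) p.1 * thresholdDiff (V q.1) (V q.2) p.2) :=
    (Measurable.thresholdDiff (by fun_prop) (by fun_prop) (by fun_prop)).mul
      (Measurable.thresholdDiff (by fun_prop) (by fun_prop) (by fun_prop))
  rw [integrable_prod_iff hm.aestronglyMeasurable]
  refine ⟨.of_forall fun q => (integrable_thresholdDiff (U q.1) (U q.2)).mul_prod
    (integrable_thresholdDiff (V q.1) (V q.2)), ?_⟩
  refine (integrable_sub_mul_sub_prod hU hV hUV).norm.congr (.of_forall fun q => ?_)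
  simp only [Function.uncurry, norm_mul, Real.norm_eq_abs]
  rw [integral_prod_mul (fun t => |thresholdDiff (U q.1) (U q.2) t|)
    (fun t => |thresholdDiff (V q.1) (V q.2) t|), integral_abs_thresholdDiff,
    integral_abs_thresholdDiff]

theorem integrable_survivalGap (hUm : Measurable U) (hVm : Measurable V)
    (hU : Integrable U μ) (hV : Integrable V μ) (hUV : Integrable (fun ω => U ω * V ω) μ) :
    Integrable (survivalGap μ U V) (volume.prod volume) := by
  have h := (integrable_thresholdDiff_mul hUm hVm hU hV hUV).integral_prod_right
  simp only [Function.uncurry, integral_thresholdDiff_mul_prod hUm hVm] at h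
  simpa using h.const_mul (1 / 2)

/-- **Hoeffding covariance identity.** -/
theorem integral_survivalGap (hUm : Measurable U) (hVm : Measurable V)
    (hU : Integrable U μ) (hV : Integrable V μ) (hUV : Integrable (fun ω => U ω * V ω) μ) :
    ∫ p, survivalGap μ U V p ∂(volume.prod volume) = covar μ U V := by
  have h := integral_integral_swap (integrable_thresholdDiff_mul hUm hVm hU hV hUV)
  have inner : ∀ q : Ω × Ω, ∫ p : ℝ × ℝ, thresholdDiff (U q.1) (U q.2) p.1 *
      thresholdDiff (V q.1) (V q.2) p.2 ∂(volume.prod volume) =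
      (U q.1 - U q.2) * (V q.1 - V q.2) := fun q => by
    rw [integral_prod_mul (thresholdDiff (U q.1) (U q.2)) (thresholdDiff (V q.1) (V q.2)),
      integral_thresholdDiff, integral_thresholdDiff]
  simp only [inner, integral_thresholdDiff_mul_prod hUm hVm, integral_const_mul,
    integral_sub_mul_sub_prod hU hV hUV] at h
  linarith

/-- A random variable that is not almost surely constant has a survival function with values
strictly between `0` and `1` on some nonempty open interval. -/
theorem exists_Ioo_survival_mem_Ioo (hUm : Measurable U) (hU : Integrable U μ)
    (hnc : ∀ c : ℝ, ¬ (U =ᵐ[μ] fun _ => c)) :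
    ∃ a b : ℝ, a < b ∧ ∀ t ∈ Set.Ioo a b, μ.real {ω | t < U ω} ∈ Set.Ioo (0 : ℝ) 1 := by
  set m := ∫ ω, U ω ∂μ with hm
  have hpos : ∃ b, m < b ∧ 0 < μ.real {ω | b < U ω} := by
    by_contra! hcon
    have hle : ∀ᵐ ω ∂μ, U ω ≤ m := by
      have hall : ∀ᵐ ω ∂μ, ∀ n : ℕ, U ω ≤ m + 1 / ((n : ℝ) + 1) := by
        rw [ae_all_iff]
        intro n
        have h0 := le_antisymm (hcon (m + 1 / ((n : ℝ) + 1)) (by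
          have : (0 : ℝ) < 1 / ((n : ℝ) + 1) := by positivity
          linarith)) measureReal_nonneg
        rw [measureReal_eq_zero_iff] at h0
        rw [ae_iff]
        simpa only [not_le] using h0
      filter_upwards [hall] with ω hω
      refine ge_of_tendsto' (x := Filter.atTop) ?_ hω
      simpa using (tendsto_one_div_add_atTop_nhds_zero_nat (𝕜 := ℝ)).const_add m
    refine hnc m ((integral_eq_iff_of_ae_le hU (integrable_const m) hle).1 ?_)
    simp [hm]
  obtain ⟨b, hmb, hb⟩ := hpos
  refine ⟨m, b, hmb, fun t ht => ⟨hb.trans_le (measureReal_mono fun ω hω => ht.2.trans hω), ?_⟩⟩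
  have hle : 0 < μ.real {ω | U ω ≤ m} :=
    ENNReal.toReal_pos (measure_le_integral_pos hU).ne' (measure_ne_top _ _)
  have hcompl : μ.real {ω | t < U ω} = 1 - μ.real {ω | U ω ≤ t} := by
    rw [← probReal_compl_eq_one_sub (measurableSet_le hUm measurable_const)]
    congr 1; ext ω; simp
  have : μ.real {ω | U ω ≤ m} ≤ μ.real {ω | U ω ≤ t} :=
    measureReal_mono fun ω hω => le_trans hω ht.1.le
  linarith

end CovarianceOfCopies

theorem covar_neg_right {Ω : Type*} [MeasurableSpace Ω] (μ : Measure Ω) (U V : Ω → ℝ) :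
    covar μ U (fun ω => -V ω) = -covar μ U V := by
  simp only [covar, mul_neg, integral_neg]
  ring

theorem ae_const_of_map_eq {Ω : Type*} [MeasurableSpace Ω] {μ : Measure Ω} {Y W : Ω → ℝ}
    {g : ℝ → ℝ} (hY : Measurable Y) (hW : Measurable W)
    (hid : μ.map W = μ.map Y) (hg : Measurable g) {c : ℝ}
    (h : (fun ω => g (W ω)) =ᵐ[μ] fun _ => c) : (fun ω => g (Y ω)) =ᵐ[μ] fun _ => c := by
  have hs : MeasurableSet {y | g y = c} := hg (measurableSet_singleton c)
  have h' := (ae_map_iff hW.aemeasurable hs).2 h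
  rw [hid] at h'
  exact (ae_map_iff hY.aemeasurable hs).1 h'

theorem Countermonotonic.comonotonic_neg {Ω : Type*} [MeasurableSpace Ω] {μ : Measure Ω}
    {X Y : Ω → ℝ} (hX : Measurable X) (hY : Measurable Y)
    (h : Countermonotonic μ X Y) : Comonotonic μ X (fun ω => -Y ω) := by
  obtain ⟨Z, ν₁, ν₂, hZ, h₁, h₂, hmap⟩ := h
  refine ⟨Z, ν₁, fun z => -ν₂ z, hZ, h₁, fun a b hab => neg_le_neg (h₂ hab), ?_⟩
  have hn : Measurable fun p : ℝ × ℝ => (p.1, -p.2) := by fun_prop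
  have := congrArg (Measure.map fun p : ℝ × ℝ => (p.1, -p.2)) hmap
  rwa [Measure.map_map hn (hX.prodMk hY), Measure.map_map hn
    (show Measurable fun ω => (ν₁ (Z ω), ν₂ (Z ω)) from
      (h₁.measurable.comp hZ).prodMk (h₂.measurable.comp hZ))] at this

section Couplings

variable {Ω : Type*} [MeasurableSpace Ω] {μ : Measure Ω} [IsProbabilityMeasure μ]
  {X Y : Ω → ℝ} {f g : ℝ → ℝ}

theorem Comonotonic.survivalGap_eq (hX : Measurable X) (hY : Measurable Y)
    (h : Comonotonic μ X Y) (hf : Monotone f) (hg : Monotone g) (p : ℝ × ℝ) :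
    survivalGap μ (fun ω => f (X ω)) (fun ω => g (Y ω)) p =
      min (μ.real {ω | p.1 < f (X ω)}) (μ.real {ω | p.2 < g (Y ω)}) -
        μ.real {ω | p.1 < f (X ω)} * μ.real {ω | p.2 < g (Y ω)} :=
  congrArg (· - _) (h.measureReal_inter_eq_min hX hY
    ((isUpperSet_Ioi p.1).preimage hf) ((isUpperSet_Ioi p.2).preimage hg)
    (hf.measurable measurableSet_Ioi) (hg.measurable measurableSet_Ioi))

/-- The comonotonic coupling maximises the covariance of nondecreasing transforms. -/
theorem Comonotonic.covar_le {W : Ω → ℝ} (hX : Measurable X) (hY : Measurable Y)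
    (hW : Measurable W) (hid : μ.map W = μ.map Y) (h : Comonotonic μ X W)
    (hf : Monotone f) (hg : Monotone g)
    (hiX : Integrable (fun ω => f (X ω)) μ) (hiY : Integrable (fun ω => g (Y ω)) μ)
    (hiW : Integrable (fun ω => g (W ω)) μ)
    (hiXY : Integrable (fun ω => f (X ω) * g (Y ω)) μ)
    (hiXW : Integrable (fun ω => f (X ω) * g (W ω)) μ) :
    covar μ (fun ω => f (X ω)) (fun ω => g (Y ω)) ≤
      covar μ (fun ω => f (X ω)) (fun ω => g (W ω)) := by
  have mX : Measurable fun ω => f (X ω) := hf.measurable.comp hX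
  have mY : Measurable fun ω => g (Y ω) := hg.measurable.comp hY
  have mW : Measurable fun ω => g (W ω) := hg.measurable.comp hW
  rw [← integral_survivalGap mX mY hiX hiY hiXY, ← integral_survivalGap mX mW hiX hiW hiXW]
  refine integral_mono (integrable_survivalGap mX mY hiX hiY hiXY)
    (integrable_survivalGap mX mW hiX hiW hiXW) fun p => ?_
  have hlaw : μ.real {ω | p.2 < g (W ω)} = μ.real {ω | p.2 < g (Y ω)} := by
    have hs : MeasurableSet (g ⁻¹' Set.Ioi p.2) := hg.measurable measurableSet_Ioi
    have := congrArg (fun m => m.real (g ⁻¹' Set.Ioi p.2)) hid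
    rwa [map_measureReal_apply hW hs, map_measureReal_apply hY hs] at this
  rw [h.survivalGap_eq hX hW hf hg, hlaw, survivalGap]
  exact sub_le_sub_right (le_min (measureReal_mono Set.inter_subset_left)
    (measureReal_mono Set.inter_subset_right)) _

/-- Non-degenerate nondecreasing transforms of a comonotonic pair have positive covariance. -/
theorem Comonotonic.covar_pos (hX : Measurable X) (hY : Measurable Y) (h : Comonotonic μ X Y)
    (hf : Monotone f) (hg : Monotone g)
    (hiX : Integrable (fun ω => f (X ω)) μ) (hiY : Integrable (fun ω => g (Y ω)) μ)
    (hiXY : Integrable (fun ω => f (X ω) * g (Y ω)) μ)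
    (hncX : ∀ c : ℝ, ¬ ((fun ω => f (X ω)) =ᵐ[μ] fun _ => c))
    (hncY : ∀ c : ℝ, ¬ ((fun ω => g (Y ω)) =ᵐ[μ] fun _ => c)) :
    0 < covar μ (fun ω => f (X ω)) (fun ω => g (Y ω)) := by
  have mX : Measurable fun ω => f (X ω) := hf.measurable.comp hX
  have mY : Measurable fun ω => g (Y ω) := hg.measurable.comp hY
  rw [← integral_survivalGap mX mY hiX hiY hiXY]
  have hnn : 0 ≤ survivalGap μ (fun ω => f (X ω)) (fun ω => g (Y ω)) := fun p => by
    rw [h.survivalGap_eq hX hY hf hg, Pi.zero_apply, sub_nonneg]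
    exact le_min (mul_le_of_le_one_right measureReal_nonneg measureReal_le_one)
      (mul_le_of_le_one_left measureReal_nonneg measureReal_le_one)
  rw [integral_pos_iff_support_of_nonneg hnn (integrable_survivalGap mX mY hiX hiY hiXY)]
  obtain ⟨a, b, hab, hp⟩ := exists_Ioo_survival_mem_Ioo mX hiX hncX
  obtain ⟨c, d, hcd, hq⟩ := exists_Ioo_survival_mem_Ioo mY hiY hncY
  have hsub : Set.Ioo a b ×ˢ Set.Ioo c d ⊆
      Function.support (survivalGap μ (fun ω => f (X ω)) (fun ω => g (Y ω))) := by
    rintro p ⟨h₁, h₂⟩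
    have hp' := hp _ h₁
    have hq' := hq _ h₂
    rw [Function.mem_support, h.survivalGap_eq hX hY hf hg]
    exact (sub_pos.2 (lt_min (mul_lt_of_lt_one_right hp'.1 hq'.2)
      (mul_lt_of_lt_one_left hq'.1 hp'.2))).ne'
  refine lt_of_lt_of_le ?_ (measure_mono hsub)
  rw [Measure.prod_prod]
  simp [hab, hcd]

/-- The countermonotonic coupling minimises the covariance of nondecreasing transforms. -/
theorem Countermonotonic.le_covar {W : Ω → ℝ} (hX : Measurable X) (hY : Measurable Y)
    (hW : Measurable W) (hid : μ.map W = μ.map Y) (h : Countermonotonic μ X W)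
    (hf : Monotone f) (hg : Monotone g)
    (hiX : Integrable (fun ω => f (X ω)) μ) (hiY : Integrable (fun ω => g (Y ω)) μ)
    (hiW : Integrable (fun ω => g (W ω)) μ)
    (hiXY : Integrable (fun ω => f (X ω) * g (Y ω)) μ)
    (hiXW : Integrable (fun ω => f (X ω) * g (W ω)) μ) :
    covar μ (fun ω => f (X ω)) (fun ω => g (W ω)) ≤
      covar μ (fun ω => f (X ω)) (fun ω => g (Y ω)) := by
  have hid' : μ.map (fun ω => -W ω) = μ.map (fun ω => -Y ω) := by
    have := congrArg (Measure.map fun x : ℝ => -x) hid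
    rwa [Measure.map_map measurable_neg hW, Measure.map_map measurable_neg hY] at this
  have key := (h.comonotonic_neg hX hW).covar_le (g := fun y => -g (-y)) hX hY.neg hW.neg hid' hf
    (fun a b hab => neg_le_neg (hg (neg_le_neg hab))) hiX (by simpa using hiY)
    (by simpa using hiW) (by simpa using hiXY) (by simpa using hiXW)
  simpa [covar_neg_right] using key

/-- Non-degenerate nondecreasing transforms of a countermonotonic pair have negative
covariance. -/
theorem Countermonotonic.covar_neg (hX : Measurable X) (hY : Measurable Y)
    (h : Countermonotonic μ X Y) (hf : Monotone f) (hg : Monotone g)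
    (hiX : Integrable (fun ω => f (X ω)) μ) (hiY : Integrable (fun ω => g (Y ω)) μ)
    (hiXY : Integrable (fun ω => f (X ω) * g (Y ω)) μ)
    (hncX : ∀ c : ℝ, ¬ ((fun ω => f (X ω)) =ᵐ[μ] fun _ => c))
    (hncY : ∀ c : ℝ, ¬ ((fun ω => g (Y ω)) =ᵐ[μ] fun _ => c)) :
    covar μ (fun ω => f (X ω)) (fun ω => g (Y ω)) < 0 := by
  have key := (h.comonotonic_neg hX hY).covar_pos (g := fun y => -g (-y)) hX hY.neg hf
    (fun a b hab => neg_le_neg (hg (neg_le_neg hab))) hiX (by simpa using hiY)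
    (by simpa using hiXY) hncX (fun c hc => hncY (-c) (by
      filter_upwards [hc] with ω hω
      rw [← hω, neg_neg, Pi.neg_apply, neg_neg]))
  simpa [covar_neg_right] using key

end Couplings

theorem generalised_correlation_properties
    {Ω : Type*} [MeasurableSpace Ω] (μ : Measure Ω) [IsProbabilityMeasure μ]
    (X Y Y' Y'' : Ω → ℝ)
    (hX : Measurable X) (hY : Measurable Y) (hY' : Measurable Y') (hY'' : Measurable Y'')
    (hid' : μ.map Y' = μ.map Y) (hid'' : μ.map Y'' = μ.map Y)
    (hcm : Countermonotonic μ X Y') (hco : Comonotonic μ X Y'')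
    (g₁ g₂ : ℝ → ℝ) (hg₁ : Monotone g₁) (hg₂ : Monotone g₂)
    (hiX : Integrable (fun ω => g₁ (X ω)) μ)
    (hiY : Integrable (fun ω => g₂ (Y ω)) μ)
    (hiY' : Integrable (fun ω => g₂ (Y' ω)) μ)
    (hiY'' : Integrable (fun ω => g₂ (Y'' ω)) μ)
    (hiP : Integrable (fun ω => g₁ (X ω) * g₂ (Y ω)) μ)
    (hiP' : Integrable (fun ω => g₁ (X ω) * g₂ (Y' ω)) μ)
    (hiP'' : Integrable (fun ω => g₁ (X ω) * g₂ (Y'' ω)) μ)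
    (hncX : ∀ c : ℝ, ¬ ((fun ω => g₁ (X ω)) =ᵐ[μ] fun _ => c))
    (hncY : ∀ c : ℝ, ¬ ((fun ω => g₂ (Y ω)) =ᵐ[μ] fun _ => c)) :
    (-1 ≤ gCor μ (fun ω => g₁ (X ω)) (fun ω => g₂ (Y ω))
        (fun ω => g₂ (Y' ω)) (fun ω => g₂ (Y'' ω)) ∧
      gCor μ (fun ω => g₁ (X ω)) (fun ω => g₂ (Y ω))
        (fun ω => g₂ (Y' ω)) (fun ω => g₂ (Y'' ω)) ≤ 1) ∧
    (Comonotonic μ X Y →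
      gCor μ (fun ω => g₁ (X ω)) (fun ω => g₂ (Y ω))
        (fun ω => g₂ (Y' ω)) (fun ω => g₂ (Y'' ω)) = 1) ∧
    (Countermonotonic μ X Y →
      gCor μ (fun ω => g₁ (X ω)) (fun ω => g₂ (Y ω))
        (fun ω => g₂ (Y' ω)) (fun ω => g₂ (Y'' ω)) = -1) := by
  have hle := hco.covar_le hX hY hY'' hid'' hg₁ hg₂ hiX hiY hiY'' hiP hiP''
  have hge := hcm.le_covar hX hY hY' hid' hg₁ hg₂ hiX hiY hiY' hiP hiP'
  have hpos := hco.covar_pos hX hY'' hg₁ hg₂ hiX hiY'' hiP'' hncX fun c hc =>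
    hncY c (ae_const_of_map_eq hY hY'' hid'' hg₂.measurable hc)
  have hneg := hcm.covar_neg hX hY' hg₁ hg₂ hiX hiY' hiP' hncX fun c hc =>
    hncY c (ae_const_of_map_eq hY hY' hid' hg₂.measurable hc)
  rw [gCor, abs_of_neg hneg, abs_of_pos hpos]
  refine ⟨?_, fun h => ?_, fun h => ?_⟩
  · split_ifs with hC
    · exact ⟨by rw [le_div_iff₀ (neg_pos.2 hneg)]; linarith,
        by rw [div_le_iff₀ (neg_pos.2 hneg)]; linarith⟩
    · exact ⟨by rw [le_div_iff₀ hpos]; linarith, by rw [div_le_iff₀ hpos]; linarith⟩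
  · have hC := h.covar_pos hX hY hg₁ hg₂ hiX hiY hiP hncX hncY
    have hle' := h.covar_le hX hY'' hY hid''.symm hg₁ hg₂ hiX hiY'' hiY hiP'' hiP
    rw [if_neg hC.not_gt, le_antisymm hle hle', div_self hpos.ne']
  · have hC := h.covar_neg hX hY hg₁ hg₂ hiX hiY hiP hncX hncY
    have hge' := h.le_covar hX hY' hY hid'.symm hg₁ hg₂ hiX hiY' hiY hiP' hiP
    rw [if_pos hC, le_antisymm hge' hge, div_neg, div_self hneg.ne]
end

section
/- Let X, Y be real random variables on a common probability space whose CDFs F_X and F_Y are continuous. Then ∫_{(0,1)²} (P(X ≤ q_α(X), Y ≤ q_β(Y)) − α·β) dα dβ = Cov(F_X∘X, F_Y∘Y), i.e., the summary covariance induced by quantile function covariance with respect to Lebesgue measure on the unit square equals the Spearman covariance, the covariance of the probability integral transforms. -/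
open MeasureTheory

/-- The CDF of a real random variable `X` under `μ`. -/
noncomputable def cdfF {Ω : Type*} [MeasurableSpace Ω] (μ : Measure Ω)
    (X : Ω → ℝ) (x : ℝ) : ℝ :=
  (μ {ω | X ω ≤ x}).toReal

/-- The lower α-quantile of `X` under `μ`. -/
noncomputable def lquant {Ω : Type*} [MeasurableSpace Ω] (μ : Measure Ω)
    (X : Ω → ℝ) (α : ℝ) : ℝ :=
  sInf {x : ℝ | α ≤ cdfF μ X x}

section QuantileTransform

variable {Ω : Type*} [MeasurableSpace Ω] {μ : Measure Ω}

lemma cdfF_eq_cdf [IsProbabilityMeasure μ] {X : Ω → ℝ} (hX : Measurable X) :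
    cdfF μ X = ProbabilityTheory.cdf (μ.map X) := by
  have := Measure.isProbabilityMeasure_map (μ := μ) hX.aemeasurable
  ext x
  rw [ProbabilityTheory.cdf_eq_real, measureReal_def, Measure.map_apply hX measurableSet_Iic]
  rfl

lemma cdfF_mem_Icc [IsProbabilityMeasure μ] (X : Ω → ℝ) (x : ℝ) :
    cdfF μ X x ∈ Set.Icc (0 : ℝ) 1 :=
  ⟨ENNReal.toReal_nonneg, measureReal_le_one⟩

lemma monotone_cdfF [IsProbabilityMeasure μ] {X : Ω → ℝ} (hX : Measurable X) :
    Monotone (cdfF μ X) := by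
  rw [cdfF_eq_cdf hX]
  exact ProbabilityTheory.monotone_cdf _

/-- A random variable with continuous CDF has no atoms. -/
lemma ae_ne_of_continuous_cdfF [IsProbabilityMeasure μ] {X : Ω → ℝ} (hX : Measurable X)
    (hF : Continuous (cdfF μ X)) (x : ℝ) : ∀ᵐ ω ∂μ, X ω ≠ x := by
  have := Measure.isProbabilityMeasure_map (μ := μ) hX.aemeasurable
  have h : (μ.map X) {x} = 0 := by
    rw [cdfF_eq_cdf hX] at hF
    rw [← ProbabilityTheory.measure_cdf (μ.map X), StieltjesFunction.measure_singleton,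
      hF.continuousAt.continuousWithinAt.leftLim_eq, sub_self, ENNReal.ofReal_zero]
  rw [Measure.map_apply hX (measurableSet_singleton x)] at h
  exact measure_eq_zero_iff_ae_notMem.1 h

section

variable [IsProbabilityMeasure μ] {X : Ω → ℝ} {α : ℝ}

lemma bddBelow_setOf_le_cdfF (hX : Measurable X) (hα : 0 < α) :
    BddBelow {x : ℝ | α ≤ cdfF μ X x} := by
  have h := ProbabilityTheory.tendsto_cdf_atBot (μ.map X)
  rw [← cdfF_eq_cdf hX] at h
  obtain ⟨a, ha⟩ := (h.eventually_lt_const hα).exists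
  exact ⟨a, fun x hx => le_of_not_gt fun hxa =>
    ((hx.trans (monotone_cdfF hX hxa.le)).trans_lt ha).false⟩

lemma nonempty_setOf_le_cdfF (hX : Measurable X) (hα : α < 1) :
    {x : ℝ | α ≤ cdfF μ X x}.Nonempty := by
  have h := ProbabilityTheory.tendsto_cdf_atTop (μ.map X)
  rw [← cdfF_eq_cdf hX] at h
  obtain ⟨a, ha⟩ := (h.eventually_const_lt hα).exists
  exact ⟨a, ha.le⟩

lemma cdfF_lt_iff_lt_lquant (hX : Measurable X) (hF : Continuous (cdfF μ X))
    (hα : α ∈ Set.Ioo (0 : ℝ) 1) (x : ℝ) : cdfF μ X x < α ↔ x < lquant μ X α := by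
  have hb := bddBelow_setOf_le_cdfF (μ := μ) hX hα.1
  have hmem : lquant μ X α ∈ {x : ℝ | α ≤ cdfF μ X x} :=
    (isClosed_le continuous_const hF).csInf_mem (nonempty_setOf_le_cdfF hX hα.2) hb
  rw [← not_le, ← not_le, not_iff_not]
  exact ⟨fun h => csInf_le hb h, fun h => le_trans hmem (monotone_cdfF hX h)⟩

lemma cdfF_lquant (hX : Measurable X) (hF : Continuous (cdfF μ X))
    (hα : α ∈ Set.Ioo (0 : ℝ) 1) : cdfF μ X (lquant μ X α) = α := by
  refine le_antisymm ?_
    (not_lt.1 fun h => ((cdfF_lt_iff_lt_lquant hX hF hα _).1 h).false)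
  refine le_of_tendsto (hF.continuousWithinAt (s := Set.Iio (lquant μ X α))) ?_
  filter_upwards [self_mem_nhdsWithin] with x hx
  exact ((cdfF_lt_iff_lt_lquant hX hF hα x).2 hx).le

lemma ae_le_lquant_iff (hX : Measurable X) (hF : Continuous (cdfF μ X))
    (hα : α ∈ Set.Ioo (0 : ℝ) 1) :
    ∀ᵐ ω ∂μ, X ω ≤ lquant μ X α ↔ cdfF μ X (X ω) < α := by
  filter_upwards [ae_ne_of_continuous_cdfF hX hF (lquant μ X α)] with ω hω
  rw [cdfF_lt_iff_lt_lquant hX hF hα]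
  exact ⟨fun h => lt_of_le_of_ne h hω, le_of_lt⟩

/-- The probability integral transform of `X` is uniformly distributed on the unit interval. -/
lemma measureReal_cdfF_comp_lt (hX : Measurable X) (hF : Continuous (cdfF μ X))
    (hα : α ∈ Set.Ioo (0 : ℝ) 1) : μ.real {ω | cdfF μ X (X ω) < α} = α := by
  conv_rhs => rw [← cdfF_lquant hX hF hα]
  refine measureReal_congr ?_
  filter_upwards [ae_le_lquant_iff hX hF hα] with ω hω
  exact propext hω.symm

end

lemma setIntegral_Ioo_indicator_Ioi {u : ℝ} (hu : u ∈ Set.Icc (0 : ℝ) 1) :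
    ∫ a in Set.Ioo (0 : ℝ) 1, (Set.Ioi u).indicator 1 a = 1 - u := by
  rw [integral_indicator_one measurableSet_Ioi, measureReal_restrict_apply measurableSet_Ioi,
    Set.Ioi_inter_Ioo, max_eq_left hu.1, Real.volume_real_Ioo_of_le hu.2]

/-- Joint survival form of the mixed moment of two `[0, 1]`-valued random variables. -/
lemma setIntegral_measureReal_lt_and_lt [IsProbabilityMeasure μ] {U V : Ω → ℝ}
    (hU : Measurable U) (hV : Measurable V) (hU01 : ∀ ω, U ω ∈ Set.Icc (0 : ℝ) 1)
    (hV01 : ∀ ω, V ω ∈ Set.Icc (0 : ℝ) 1) :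
    IntegrableOn (fun p : ℝ × ℝ => μ.real {ω | U ω < p.1 ∧ V ω < p.2})
        (Set.Ioo (0 : ℝ) 1 ×ˢ Set.Ioo (0 : ℝ) 1) ∧
      ∫ p in Set.Ioo (0 : ℝ) 1 ×ˢ Set.Ioo (0 : ℝ) 1, μ.real {ω | U ω < p.1 ∧ V ω < p.2}
        = ∫ ω, (1 - U ω) * (1 - V ω) ∂μ := by
  set Q : Set (ℝ × ℝ) := Set.Ioo (0 : ℝ) 1 ×ˢ Set.Ioo (0 : ℝ) 1
  have hQ : IsFiniteMeasure ((volume : Measure (ℝ × ℝ)).restrict Q) := by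
    refine isFiniteMeasure_restrict.2 ?_
    rw [Measure.volume_eq_prod, Measure.prod_prod]
    simp
  let S : Set ((ℝ × ℝ) × Ω) := {z | U z.2 < z.1.1 ∧ V z.2 < z.1.2}
  have hS : MeasurableSet S :=
    (measurableSet_lt (hU.comp measurable_snd) measurable_fst.fst).inter
      (measurableSet_lt (hV.comp measurable_snd) measurable_fst.snd)
  have hint : Integrable (S.indicator (1 : (ℝ × ℝ) × Ω → ℝ)) ((volume.restrict Q).prod μ) :=
    (integrable_const 1).indicator hS
  have hfst (p : ℝ × ℝ) :
      ∫ ω, S.indicator (1 : (ℝ × ℝ) × Ω → ℝ) (p, ω) ∂μ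
        = μ.real {ω | U ω < p.1 ∧ V ω < p.2} :=
    integral_indicator_one (measurable_prodMk_left hS)
  have hsnd (ω : Ω) :
      ∫ p in Q, S.indicator (1 : (ℝ × ℝ) × Ω → ℝ) (p, ω) = (1 - U ω) * (1 - V ω) := by
    rw [← setIntegral_Ioo_indicator_Ioi (hU01 ω), ← setIntegral_Ioo_indicator_Ioi (hV01 ω),
      ← setIntegral_prod_mul, ← Measure.volume_eq_prod]
    refine integral_congr_ae (.of_forall fun p => ?_)
    by_cases h₁ : U ω < p.1 <;> by_cases h₂ : V ω < p.2 <;>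
      simp [S, Set.indicator, h₁, h₂]
  refine ⟨?_, ?_⟩
  · simpa only [hfst, IntegrableOn] using hint.integral_prod_left
  · simp_rw [← hfst, ← hsnd]
    exact integral_integral_swap (f := fun p ω => S.indicator (1 : (ℝ × ℝ) × Ω → ℝ) (p, ω)) hint

lemma setIntegral_Ioo_id : ∫ a in Set.Ioo (0 : ℝ) 1, a = 1 / 2 := by
  rw [← integral_Ioc_eq_integral_Ioo, ← intervalIntegral.integral_of_le zero_le_one, integral_id]
  norm_num

lemma integrable_of_mem_Icc [IsFiniteMeasure μ] {U : Ω → ℝ} (hU : Measurable U)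
    (hU01 : ∀ ω, U ω ∈ Set.Icc (0 : ℝ) 1) : Integrable U μ :=
  Integrable.of_mem_Icc 0 1 hU.aemeasurable (.of_forall hU01)

/-- The probability integral transform of a random variable with continuous CDF has mean `1/2`. -/
lemma integral_cdfF_comp [IsProbabilityMeasure μ] {X : Ω → ℝ} (hX : Measurable X)
    (hF : Continuous (cdfF μ X)) : ∫ ω, cdfF μ X (X ω) ∂μ = 1 / 2 := by
  have hU : Measurable fun ω => cdfF μ X (X ω) := hF.measurable.comp hX
  have hU01 (ω : Ω) := cdfF_mem_Icc (μ := μ) X (X ω)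
  have h := (setIntegral_measureReal_lt_and_lt (μ := μ) hU (measurable_const (a := (0 : ℝ))) hU01
    (fun _ => by simp)).2
  have hprod : ∫ p in Set.Ioo (0 : ℝ) 1 ×ˢ Set.Ioo (0 : ℝ) 1,
      μ.real {ω | cdfF μ X (X ω) < p.1 ∧ 0 < p.2} = 1 / 2 := by
    calc _ = ∫ p in Set.Ioo (0 : ℝ) 1 ×ˢ Set.Ioo (0 : ℝ) 1, p.1 * (1 : ℝ) := by
          refine setIntegral_congr_fun (measurableSet_Ioo.prod measurableSet_Ioo) fun p hp => ?_
          simp [hp.2.1, measureReal_cdfF_comp_lt hX hF hp.1]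
      _ = _ := by
          rw [Measure.volume_eq_prod,
            setIntegral_prod_mul (fun a : ℝ => a) (fun _ : ℝ => (1 : ℝ)), setIntegral_Ioo_id]
          simp
  rw [hprod] at h
  simp only [sub_zero, mul_one] at h
  rw [integral_sub (integrable_const 1) (integrable_of_mem_Icc hU hU01)] at h
  simp only [integral_const, probReal_univ, smul_eq_mul, mul_one] at h
  linarith

end QuantileTransform

theorem summary_QF_covariance_wrt_lebesgue_is_spearman_covariance
    {Ω : Type*} [MeasurableSpace Ω] (μ : Measure Ω) [IsProbabilityMeasure μ]
    (X Y : Ω → ℝ) (hX : Measurable X) (hY : Measurable Y)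
    (hFX : Continuous (cdfF μ X)) (hFY : Continuous (cdfF μ Y)) :
    ∫ p in Set.Ioo (0 : ℝ) 1 ×ˢ Set.Ioo (0 : ℝ) 1,
        ((μ {ω | X ω ≤ lquant μ X p.1 ∧ Y ω ≤ lquant μ Y p.2}).toReal - p.1 * p.2)
      = covar μ (fun ω => cdfF μ X (X ω)) (fun ω => cdfF μ Y (Y ω)) := by
  have hU : Measurable fun ω => cdfF μ X (X ω) := hFX.measurable.comp hX
  have hV : Measurable fun ω => cdfF μ Y (Y ω) := hFY.measurable.comp hY
  have hU01 (ω : Ω) := cdfF_mem_Icc (μ := μ) X (X ω)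
  have hV01 (ω : Ω) := cdfF_mem_Icc (μ := μ) Y (Y ω)
  have hUi := integrable_of_mem_Icc (μ := μ) hU hU01
  have hVi := integrable_of_mem_Icc (μ := μ) hV hV01
  have hUVi : Integrable (fun ω => cdfF μ X (X ω) * cdfF μ Y (Y ω)) μ :=
    integrable_of_mem_Icc (hU.mul hV) fun ω =>
      ⟨mul_nonneg (hU01 ω).1 (hV01 ω).1, mul_le_one₀ (hU01 ω).2 (hV01 ω).1 (hV01 ω).2⟩
  obtain ⟨hint, hjoint⟩ := setIntegral_measureReal_lt_and_lt (μ := μ) hU hV hU01 hV01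
  have hid : IntegrableOn (fun a : ℝ => a) (Set.Ioo 0 1) :=
    continuous_id.integrableOn_Icc.mono_set Set.Ioo_subset_Icc_self
  have hmul : IntegrableOn (fun p : ℝ × ℝ => p.1 * p.2)
      (Set.Ioo (0 : ℝ) 1 ×ˢ Set.Ioo (0 : ℝ) 1) := by
    rw [IntegrableOn, Measure.volume_eq_prod, ← Measure.prod_restrict]
    exact hid.mul_prod hid
  have hcongr : ∫ p in Set.Ioo (0 : ℝ) 1 ×ˢ Set.Ioo (0 : ℝ) 1,
        ((μ {ω | X ω ≤ lquant μ X p.1 ∧ Y ω ≤ lquant μ Y p.2}).toReal - p.1 * p.2)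
      = ∫ p in Set.Ioo (0 : ℝ) 1 ×ˢ Set.Ioo (0 : ℝ) 1,
        (μ.real {ω | cdfF μ X (X ω) < p.1 ∧ cdfF μ Y (Y ω) < p.2} - p.1 * p.2) := by
    refine setIntegral_congr_fun (measurableSet_Ioo.prod measurableSet_Ioo) fun p hp => ?_
    refine congrArg (· - p.1 * p.2) (measureReal_congr ?_)
    filter_upwards [ae_le_lquant_iff hX hFX hp.1, ae_le_lquant_iff hY hFY hp.2] with ω h₁ h₂
    exact propext (and_congr h₁ h₂)
  have hquarter : ∫ p in Set.Ioo (0 : ℝ) 1 ×ˢ Set.Ioo (0 : ℝ) 1, p.1 * p.2 = 1 / 4 := by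
    rw [Measure.volume_eq_prod, setIntegral_prod_mul (fun a : ℝ => a) (fun a : ℝ => a),
      setIntegral_Ioo_id]
    norm_num
  have hexpand : ∫ ω, (1 - cdfF μ X (X ω)) * (1 - cdfF μ Y (Y ω)) ∂μ
      = ∫ ω, cdfF μ X (X ω) * cdfF μ Y (Y ω) ∂μ := by
    calc _ = ∫ ω, (1 - cdfF μ X (X ω) - cdfF μ Y (Y ω)
            + cdfF μ X (X ω) * cdfF μ Y (Y ω)) ∂μ := by
          congr 1 with ω
          ring
      _ = _ := by
          have hsub : Integrable (fun ω => 1 - cdfF μ X (X ω)) μ := (integrable_const 1).sub hUi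
          rw [integral_add (f := fun ω => 1 - cdfF μ X (X ω) - cdfF μ Y (Y ω)) (hsub.sub hVi) hUVi,
            integral_sub hsub hVi,
            integral_sub (integrable_const 1) hUi,
            integral_cdfF_comp hX hFX, integral_cdfF_comp hY hFY]
          simp only [integral_const, probReal_univ, smul_eq_mul]
          ring
  rw [hcongr, integral_sub hint hmul, hjoint, hquarter, hexpand, covar,
    integral_cdfF_comp hX hFX, integral_cdfF_comp hY hFY]
  norm_num
end
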